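/- arXiv:2001.02470 — 2 statements merged into one kernel-verified Lean document; each statement's English description precedes it below -/
import Mathlib

section
/- Suppose a is contained in the Jacobson radical of R and cd(a,M) = ara(a,M). Then the following are equivalent: (i) M is a-relative quasi Buchsbaum; (ii) there exists an a-relative system of parameters of M contained in a² which is an a-weak sequence on M; (iii) a · H^i_a(M) = 0 for all 0 ≤ i < cd(a,M). -/
/-!
Formalization of a statement from "A theory of relative generalized Cohen-Macaulay modules"
by Divaani-Aazar, Ghanbari Doust, Tousi and Zakeri.

Throughout, `R` is a commutative Noetherian ring and `M` a finitely generated `R`-module.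
Conventions used below:
* `locH I i M` is the local cohomology module `H^i_I(M)` (Mathlib's `localCohomology`).
* Conditions `cd(I,M) = c`, `ara(I,M) = n`, `f_I(M) = f`, `grade(I,M) = r` are expressed by
  the predicates `IsCd`, `IsAra`, `IsFinDim`, `IsGrade`.
* Sequences are given as functions `Fin r → R`; `pSpan M x i = ⟨x_0,…,x_{i-1}⟩M`.
* Koszul (co)homology is defined via the explicit (co)chain complex on the `p`-element
  subsets of `{0,…,n-1}`, and the canonical map `λ^i` into local cohomology is the structure
  map (at exponent 1) into the direct limit of Koszul cohomologies of powers of the sequence,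
  which is the realization of `H^i_{⟨x⟩}(M)` used in the paper (2.1(iv)).
-/

open CategoryTheory

noncomputable section

variable {R : Type} [CommRing R]

/-! ### Sequences: prefix spans, weak sequences, filter regular sequences, d-sequences -/

/-- `pSpan M x i` is the submodule `⟨x_0, …, x_{i-1}⟩M` of `M`. -/
def pSpan (M : Type) [AddCommGroup M] [Module R M] {r : ℕ} (x : Fin r → R) (i : Fin r) :
    Submodule R M :=
  Ideal.span (x '' {j | j < i}) • (⊤ : Submodule R M)

/-- `x_1, …, x_r` is an `I`-weak sequence on `M`:
`(⟨x_1,…,x_{i-1}⟩M :_M x_i) ⊆ (⟨x_1,…,x_{i-1}⟩M :_M I)` for all `i`. -/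
def IsWeakSeq (I : Ideal R) (M : Type) [AddCommGroup M] [Module R M] {r : ℕ}
    (x : Fin r → R) : Prop :=
  ∀ i : Fin r, ∀ m : M, x i • m ∈ pSpan M x i → ∀ a ∈ I, a • m ∈ pSpan M x i

/-- `x_1, …, x_r` is an `I`-filter regular sequence on `M`:
`(⟨x_1,…,x_{i-1}⟩M :_M x_i) ⊆ ⋃ₜ (⟨x_1,…,x_{i-1}⟩M :_M I^t)` for all `i`. -/
def IsFilterRegSeq (I : Ideal R) (M : Type) [AddCommGroup M] [Module R M] {r : ℕ}
    (x : Fin r → R) : Prop :=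
  ∀ i : Fin r, ∀ m : M, x i • m ∈ pSpan M x i →
    ∃ t : ℕ, ∀ a ∈ I ^ t, a • m ∈ pSpan M x i

/-- An unconditioned `I`-filter regular sequence: filter regular in any order. -/
def IsUncondFilterRegSeq (I : Ideal R) (M : Type) [AddCommGroup M] [Module R M] {r : ℕ}
    (x : Fin r → R) : Prop :=
  ∀ σ : Equiv.Perm (Fin r), IsFilterRegSeq I M (x ∘ σ)

/-- An unconditioned `I`-weak sequence: all positive powers, in any order, form an
`I`-weak sequence. -/
def IsUncondWeakSeq (I : Ideal R) (M : Type) [AddCommGroup M] [Module R M] {r : ℕ}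
    (x : Fin r → R) : Prop :=
  ∀ σ : Equiv.Perm (Fin r), ∀ α : Fin r → ℕ, (∀ k, 0 < α k) →
    IsWeakSeq I M fun k => x (σ k) ^ α k

/-- `x_1, …, x_r` is a d-sequence on `M`:
`(⟨x_1,…,x_{i-1}⟩M :_M x_i x_j) = (⟨x_1,…,x_{i-1}⟩M :_M x_j)` for all `i ≤ j`. -/
def IsDSeq (M : Type) [AddCommGroup M] [Module R M] {r : ℕ} (x : Fin r → R) : Prop :=
  ∀ i j : Fin r, i ≤ j → ∀ m : M,
    ((x i * x j) • m ∈ pSpan M x i ↔ x j • m ∈ pSpan M x i)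

/-- An u.s.d-sequence on `M`: all positive powers, in any order, form a d-sequence. -/
def IsUSDSeq (M : Type) [AddCommGroup M] [Module R M] {r : ℕ} (x : Fin r → R) : Prop :=
  ∀ σ : Equiv.Perm (Fin r), ∀ α : Fin r → ℕ, (∀ k, 0 < α k) →
    IsDSeq M fun k => x (σ k) ^ α k

/-! ### Local cohomology, cohomological dimension, arithmetic rank -/

/-- The `i`-th local cohomology module `H^i_I(M)`. -/
abbrev locH (I : Ideal R) (i : ℕ) (M : Type) [AddCommGroup M] [Module R M] : ModuleCat R :=
  (localCohomology I i).obj (ModuleCat.of R M)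

/-- `cd(I, M) = c`: the cohomological dimension of `I` on `M` equals `c`, i.e.
`H^c_I(M) ≠ 0` and `H^i_I(M) = 0` for all `i > c`. -/
def IsCd (I : Ideal R) (M : Type) [AddCommGroup M] [Module R M] (c : ℕ) : Prop :=
  Nontrivial (locH I c M) ∧ ∀ i : ℕ, c < i → Subsingleton (locH I i M)

/-- `f_I(M) = f`: the `I`-finiteness dimension of `M` equals `f`, i.e. `f` is the least
integer such that `H^f_I(M)` is not finitely generated. -/
def IsFinDim (I : Ideal R) (M : Type) [AddCommGroup M] [Module R M] (f : ℕ) : Prop :=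
  (∀ i : ℕ, i < f → Module.Finite R (locH I i M)) ∧ ¬ Module.Finite R (locH I f M)

/-- `M` is `I`-relative generalized Cohen-Macaulay: `cd(I,M) ≤ 0` or `cd(I,M) = f_I(M)`. -/
def IsRelGCM (I : Ideal R) (M : Type) [AddCommGroup M] [Module R M] : Prop :=
  (∀ i : ℕ, 0 < i → Subsingleton (locH I i M)) ∨
    ∃ c : ℕ, IsCd I M c ∧ IsFinDim I M c

/-- `ara(I, M) = n`: the arithmetic rank of `I` with respect to `M` equals `n`, i.e. `n` is the
least integer such that there are `x_1, …, x_n ∈ R` with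
`Rad(⟨x_1,…,x_n⟩ + Ann M) = Rad(I + Ann M)`. -/
def IsAra (I : Ideal R) (M : Type) [AddCommGroup M] [Module R M] (n : ℕ) : Prop :=
  IsLeast {k : ℕ | ∃ x : Fin k → R,
    (Ideal.span (Set.range x) + Module.annihilator R M).radical
      = (I + Module.annihilator R M).radical} n

/-- `x_1, …, x_c` is an `I`-relative system of parameters of `M` (where `c = cd(I,M)`):
the `x_i` lie in `I` and `Rad(⟨x_1,…,x_c⟩ + Ann M) = Rad(I + Ann M)`. -/
def IsRsop (I : Ideal R) (M : Type) [AddCommGroup M] [Module R M] {c : ℕ}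
    (x : Fin c → R) : Prop :=
  (∀ j, x j ∈ I) ∧
    (Ideal.span (Set.range x) + Module.annihilator R M).radical
      = (I + Module.annihilator R M).radical

/-! ### Relative Buchsbaum and relative quasi Buchsbaum modules -/

/-- `M` is `I`-relative Buchsbaum: `cd(I,M) = ara(I,M)` and every `I`-relative system of
parameters of `M` is an `I`-weak sequence on `M`. -/
def IsRelBuchsbaum (I : Ideal R) (M : Type) [AddCommGroup M] [Module R M] : Prop :=
  ∃ c : ℕ, IsCd I M c ∧ IsAra I M c ∧
    ∀ x : Fin c → R, IsRsop I M x → IsWeakSeq I M x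

/-- `M` is `I`-relative quasi Buchsbaum: `cd(I,M) = ara(I,M)` and every `I`-relative system of
parameters of `M` contained in `I²` is an `I`-weak sequence on `M`. -/
def IsRelQuasiBuchsbaum (I : Ideal R) (M : Type) [AddCommGroup M] [Module R M] : Prop :=
  ∃ c : ℕ, IsCd I M c ∧ IsAra I M c ∧
    ∀ x : Fin c → R, IsRsop I M x → (∀ j, x j ∈ I ^ 2) → IsWeakSeq I M x

namespace LHTheory

/-- The module `R/I^t`. -/
abbrev QP (I : Ideal R) (t : ℕ) : ModuleCat.{0} R := ModuleCat.of R (R ⧸ I ^ t)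

/-- The transition map `R/I^t ⟶ R/I^s`. -/
def tr (I : Ideal R) {s t : ℕ} (h : s ≤ t) : QP I t ⟶ QP I s :=
  ModuleCat.ofHom (Submodule.mapQ (I ^ t) (I ^ s) LinearMap.id (Ideal.pow_le_pow_right h))

lemma tr_self (I : Ideal R) (s : ℕ) : tr I (le_refl s) = 𝟙 _ := by
  apply ModuleCat.hom_ext
  apply Submodule.linearMap_qext
  rfl

lemma tr_tr (I : Ideal R) {s t u : ℕ} (h : s ≤ t) (h' : t ≤ u) :
    tr I h' ≫ tr I h = tr I (h.trans h') := by
  apply ModuleCat.hom_ext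
  apply Submodule.linearMap_qext
  rfl

/-- The transition maps on Ext. -/
def trExt (I : Ideal R) (i : ℕ) (M : ModuleCat.{0} R) (s t : ℕ) (h : s ≤ t) :
    Abelian.Ext.{0} (QP I s) M i →ₗ[R] Abelian.Ext.{0} (QP I t) M i where
  toFun e := (Abelian.Ext.mk₀ (tr I h)).comp e (zero_add i)
  map_add' := by simp
  map_smul' := by simp

lemma trExt_apply (I : Ideal R) (i : ℕ) (M : ModuleCat.{0} R) (s t : ℕ) (h : s ≤ t) (e) :
    trExt I i M s t h e = (Abelian.Ext.mk₀ (tr I h)).comp e (zero_add i) := rfl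

instance (I : Ideal R) (i : ℕ) (M : ModuleCat.{0} R) :
    DirectedSystem (fun t => Abelian.Ext.{0} (QP I t) M i) (fun s t h => trExt I i M s t h) where
  map_self := by
    intro s x
    simp [trExt_apply, tr_self]
  map_map := by
    intro s t u h h' x
    simp [trExt_apply, ← tr_tr I h h', ← Abelian.Ext.mk₀_comp_mk₀_assoc]

/-- Our model of local cohomology. -/
def LH (I : Ideal R) (i : ℕ) (M : ModuleCat.{0} R) : Type :=
  Module.DirectLimit (fun t => Abelian.Ext.{0} (QP I t) M i) (trExt I i M)

instance (I : Ideal R) (i : ℕ) (M : ModuleCat.{0} R) : AddCommGroup (LH I i M) :=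
  inferInstanceAs (AddCommGroup (Module.DirectLimit _ (trExt I i M)))
instance (I : Ideal R) (i : ℕ) (M : ModuleCat.{0} R) : Module R (LH I i M) :=
  inferInstanceAs (Module R (Module.DirectLimit _ (trExt I i M)))

/-- The structure map. -/
def of (I : Ideal R) (i : ℕ) (M : ModuleCat.{0} R) (t : ℕ) :
    Abelian.Ext.{0} (QP I t) M i →ₗ[R] LH I i M :=
  Module.DirectLimit.of R ℕ (fun t => Abelian.Ext.{0} (QP I t) M i) (trExt I i M) t

variable {I : Ideal R} {i : ℕ} {M N : ModuleCat.{0} R}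

lemma of_tr {s t : ℕ} (h : s ≤ t) (e : Abelian.Ext.{0} (QP I s) M i) :
    of I i M t (trExt I i M s t h e) = of I i M s e :=
  Module.DirectLimit.of_f

lemma exists_of (z : LH I i M) : ∃ t e, of I i M t e = z :=
  Module.DirectLimit.exists_of (f := trExt I i M) z

lemma of_eq_zero_iff {t : ℕ} {e : Abelian.Ext.{0} (QP I t) M i} :
    of I i M t e = 0 ↔ ∃ u, ∃ h : t ≤ u, trExt I i M t u h e = 0 := by
  constructor
  · intro h
    exact Module.DirectLimit.of.zero_exact (f := trExt I i M) h
  · rintro ⟨u, h, he⟩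
    rw [← of_tr h, he, map_zero]

/-- Right composition with an Ext class induces a map of local cohomology. -/
def rcomp (I : Ideal R) {i j k : ℕ} (α : Abelian.Ext.{0} M N j) (h : i + j = k) :
    LH I i M →ₗ[R] LH I k N :=
  Module.DirectLimit.map (fun t =>
    { toFun := fun e => e.comp α h
      map_add' := by simp
      map_smul' := by simp }) (by
    intro s t hst
    ext e
    simp only [LinearMap.comp_apply, trExt_apply, LinearMap.coe_mk, AddHom.coe_mk]
    rw [Abelian.Ext.comp_assoc]
    omega)

@[simp]
lemma rcomp_of {i j k : ℕ} (α : Abelian.Ext.{0} M N j) (h : i + j = k) (t : ℕ) (e) :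
    rcomp I α h (of I i M t e) = of I k N t (e.comp α h) :=
  Module.DirectLimit.map_apply_of _ _ _

/-- Functoriality. -/
def map (I : Ideal R) (i : ℕ) (f : M ⟶ N) : LH I i M →ₗ[R] LH I i N :=
  rcomp I (Abelian.Ext.mk₀ f) (add_zero i)

@[simp]
lemma map_of (f : M ⟶ N) (t : ℕ) (e) :
    map I i f (of I i M t e) = of I i N t (e.comp (Abelian.Ext.mk₀ f) (add_zero i)) :=
  rcomp_of _ _ _ _

lemma map_id (z : LH I i M) : map I i (𝟙 M) z = z := by
  obtain ⟨t, e, rfl⟩ := exists_of z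
  simp

lemma map_comp {L : ModuleCat.{0} R} (f : L ⟶ M) (g : M ⟶ N) (z : LH I i L) :
    map I i (f ≫ g) z = map I i g (map I i f z) := by
  obtain ⟨t, e, rfl⟩ := exists_of z
  simp only [map_of]
  rw [Abelian.Ext.comp_assoc_of_third_deg_zero, Abelian.Ext.mk₀_comp_mk₀]

lemma map_add (f g : M ⟶ N) (z : LH I i M) :
    map I i (f + g) z = map I i f z + map I i g z := by
  obtain ⟨t, e, rfl⟩ := exists_of z
  simp [Abelian.Ext.mk₀_add]

lemma map_zero' (z : LH I i M) : map I i (0 : M ⟶ N) z = 0 := by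
  obtain ⟨t, e, rfl⟩ := exists_of z
  simp

lemma map_sum {ι : Type} [Fintype ι] (f : ι → (M ⟶ N)) (z : LH I i M) :
    map I i (∑ k, f k) z = ∑ k, map I i (f k) z := by
  obtain ⟨t, e, rfl⟩ := exists_of z
  simp [Abelian.Ext.mk₀_sum, Abelian.Ext.comp_sum]

lemma map_smul_hom (r : R) (f : M ⟶ N) (z : LH I i M) :
    map I i (r • f) z = r • map I i f z := by
  obtain ⟨t, e, rfl⟩ := exists_of z
  simp [Abelian.Ext.mk₀_smul]

section les
variable {S : ShortComplex (ModuleCat.{0} R)} (hS : S.ShortExact)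

/-- The connecting map. -/
def δ (I : Ideal R) (i : ℕ) : LH I i S.X₃ →ₗ[R] LH I (i + 1) S.X₁ := rcomp I hS.extClass rfl

lemma exact₂ (hS : S.ShortExact) (z : LH I i S.X₂) (hz : map I i S.g z = 0) : ∃ y, map I i S.f y = z := by
  obtain ⟨t, e, rfl⟩ := exists_of z
  rw [map_of, of_eq_zero_iff] at hz
  obtain ⟨u, h, hu⟩ := hz
  rw [← of_tr h]
  obtain ⟨x, hx⟩ := Abelian.Ext.covariant_sequence_exact₂ _ hS (trExt I i _ t u h e) (by
    rw [← hu, trExt_apply, trExt_apply, Abelian.Ext.comp_assoc]; omega)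
  exact ⟨of I i _ u x, by rw [map_of, hx]⟩

lemma exact₃ (z : LH I i S.X₃) (hz : δ hS I i z = 0) : ∃ y, map I i S.g y = z := by
  obtain ⟨t, e, rfl⟩ := exists_of z
  rw [δ, rcomp_of, of_eq_zero_iff] at hz
  obtain ⟨u, h, hu⟩ := hz
  rw [← of_tr h]
  obtain ⟨x, hx⟩ := Abelian.Ext.covariant_sequence_exact₃ _ hS (trExt I i _ t u h e) rfl (by
    rw [← hu, trExt_apply, trExt_apply, Abelian.Ext.comp_assoc]; omega)
  exact ⟨of I i _ u x, by rw [map_of, hx]⟩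

lemma exact₁ (z : LH I (i + 1) S.X₁) (hz : map I (i + 1) S.f z = 0) :
    ∃ y, δ hS I i y = z := by
  obtain ⟨t, e, rfl⟩ := exists_of z
  rw [map_of, of_eq_zero_iff] at hz
  obtain ⟨u, h, hu⟩ := hz
  rw [← of_tr h]
  obtain ⟨x, hx⟩ := Abelian.Ext.covariant_sequence_exact₁ _ hS (trExt I _ _ t u h e) (by
    rw [← hu, trExt_apply, trExt_apply, Abelian.Ext.comp_assoc]; omega) rfl
  exact ⟨of I i _ u x, by rw [δ, rcomp_of, hx]⟩

lemma δ_map_g (z : LH I i S.X₂) : δ hS I i (map I i S.g z) = 0 := by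
  obtain ⟨t, e, rfl⟩ := exists_of z
  rw [map_of, δ, rcomp_of, Abelian.Ext.comp_assoc (a₂₃ := 1) _ _ _ _ (by omega) (by omega),
    hS.comp_extClass, Abelian.Ext.comp_zero, _root_.map_zero]

lemma map_f_δ (z : LH I i S.X₃) : map I (i + 1) S.f (δ hS I i z) = 0 := by
  obtain ⟨t, e, rfl⟩ := exists_of z
  rw [δ, rcomp_of, map_of, Abelian.Ext.comp_assoc (a₂₃ := 1) _ _ _ _ (by omega) (by omega),
    hS.extClass_comp, Abelian.Ext.comp_zero, _root_.map_zero]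

lemma δ_nat {S' : ShortComplex (ModuleCat.{0} R)} (hS' : S'.ShortExact) (φ : S ⟶ S')
    (z : LH I i S.X₃) :
    map I (i + 1) φ.τ₁ (δ hS I i z) = δ hS' I i (map I i φ.τ₃ z) := by
  obtain ⟨t, e, rfl⟩ := exists_of z
  rw [δ, δ, rcomp_of, map_of, map_of, rcomp_of,
    Abelian.Ext.comp_assoc (a₂₃ := 1) _ _ _ _ (by omega) (by omega),
    ShortComplex.ShortExact.extClass_naturality hS hS' φ,
    Abelian.Ext.comp_assoc (a₂₃ := 1) _ _ _ _ (by omega) (by omega)]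
end les

lemma ext_smul_mk₀ {A B : ModuleCat.{0} R} (r : R) (h : r • 𝟙 A = 0) (e : Abelian.Ext.{0} A B i) :
    r • e = 0 := by
  have : (Abelian.Ext.mk₀ (r • 𝟙 A)).comp e (zero_add i) = r • e := by
    rw [Abelian.Ext.mk₀_smul]; simp
  rw [← this, h]; simp

/-- Elements of local cohomology are torsion. -/
lemma torsion (z : LH I i M) : ∃ t : ℕ, ∀ r ∈ I ^ t, r • z = 0 := by
  obtain ⟨t, e, rfl⟩ := exists_of z
  refine ⟨t, fun r hr => ?_⟩
  rw [← _root_.map_smul, ext_smul_mk₀ r _ e, _root_.map_zero]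
  apply ModuleCat.hom_ext
  apply Submodule.linearMap_qext
  ext
  change Submodule.Quotient.mk (r • (1 : R)) = 0
  rw [Submodule.Quotient.mk_eq_zero]
  simpa using hr

lemma subsingleton_of_injective [Injective M] (z : LH I (i + 1) M) : z = 0 := by
  obtain ⟨t, e, rfl⟩ := exists_of z
  rw [e.eq_zero_of_injective, _root_.map_zero]

/-! degree zero -/
/-- evaluation at 1. -/
def ev0 (I : Ideal R) (M : ModuleCat.{0} R) : LH I 0 M →ₗ[R] M :=
  Module.DirectLimit.lift R ℕ _ (trExt I 0 M) (fun t =>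
    { toFun := fun e => (Abelian.Ext.linearEquiv₀ (R := R) e).hom (Submodule.Quotient.mk (1 : R))
      map_add' := by simp
      map_smul' := by simp }) (by
    intro s t h e
    obtain ⟨f, rfl⟩ := (Abelian.Ext.linearEquiv₀ (R := R)).symm.surjective e
    simp only [LinearMap.coe_mk, AddHom.coe_mk, trExt_apply]
    rw [Abelian.Ext.linearEquiv₀_symm_apply, Abelian.Ext.mk₀_comp_mk₀,
      ← Abelian.Ext.linearEquiv₀_symm_apply (R := R), ← Abelian.Ext.linearEquiv₀_symm_apply (R := R)]
    simp only [LinearEquiv.apply_symm_apply]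
    rfl)

lemma ev0_of (t : ℕ) (f : QP I t ⟶ M) :
    ev0 I M (of I 0 M t (Abelian.Ext.mk₀ f)) = f.hom (Submodule.Quotient.mk (1 : R)) := by
  have : ev0 I M (of I 0 M t (Abelian.Ext.mk₀ f)) = (Abelian.Ext.linearEquiv₀ (R := R)
    (Abelian.Ext.mk₀ f)).hom (Submodule.Quotient.mk (1 : R)) :=
    Module.DirectLimit.lift_of _ _ _
  rw [this, ← Abelian.Ext.linearEquiv₀_symm_apply (R := R), LinearEquiv.apply_symm_apply]

lemma exists_of0 (z : LH I 0 M) : ∃ (t : ℕ) (f : QP I t ⟶ M), of I 0 M t (Abelian.Ext.mk₀ f) = z := by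
  obtain ⟨t, e, rfl⟩ := exists_of z
  exact ⟨t, Abelian.Ext.linearEquiv₀ (R := R) e, by simp⟩

lemma ev0_injective : Function.Injective (ev0 I M) := by
  rw [injective_iff_map_eq_zero]
  intro z hz
  obtain ⟨t, f, rfl⟩ := exists_of0 z
  rw [ev0_of] at hz
  have : f = 0 := by
    apply ModuleCat.hom_ext
    apply Submodule.linearMap_qext
    ext
    exact hz
  rw [this]; simp

lemma ev0_surj (m : M) (t : ℕ) (h : ∀ r ∈ I ^ t, r • m = 0) : ∃ z, ev0 I M z = m := by
  refine ⟨of I 0 M t (Abelian.Ext.mk₀ (ModuleCat.ofHom ((I ^ t).liftQ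
    (LinearMap.toSpanSingleton R M m) (fun r hr => ?_)))), ?_⟩
  · exact h r hr
  · rw [ev0_of]
    exact one_smul R m

lemma ev0_nat (f : M ⟶ N) (z : LH I 0 M) : ev0 I N (map I 0 f z) = f.hom (ev0 I M z) := by
  obtain ⟨t, g, rfl⟩ := exists_of0 z
  rw [map_of, Abelian.Ext.mk₀_comp_mk₀, ev0_of, ev0_of]
  rfl

end LHTheory

namespace LHTheory

/-- the Hom functor. -/
abbrev HF (M : ModuleCat.{0} R) : ModuleCat.{0} R ⥤ (ModuleCat.{0} R)ᵒᵖ :=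
  ((linearYoneda R (ModuleCat.{0} R)).obj M).rightOp

/-- the Hom complex. -/
abbrev HK (P : ChainComplex (ModuleCat.{0} R) ℕ) (M : ModuleCat.{0} R) :
    ChainComplex (ModuleCat.{0} R)ᵒᵖ ℕ :=
  ((HF M).mapHomologicalComplex (ComplexShape.down ℕ)).obj P

/-- cocycle inclusion. -/
def zI (P : ChainComplex (ModuleCat.{0} R) ℕ) (M : ModuleCat.{0} R) (n : ℕ) :
    ((HK P M).opcycles n).unop →ₗ[R] (P.X n ⟶ M) := ((HK P M).pOpcycles n).unop.hom

/-- cocycle projection. -/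
def zP (P : ChainComplex (ModuleCat.{0} R) ℕ) (M : ModuleCat.{0} R) (n : ℕ) :
    ((HK P M).opcycles n).unop →ₗ[R] ((HK P M).homology n).unop := ((HK P M).homologyι n).unop.hom

/-- coboundaries. -/
def zB (P : ChainComplex (ModuleCat.{0} R) ℕ) (M : ModuleCat.{0} R) (n j : ℕ) :
    (P.X j ⟶ M) →ₗ[R] ((HK P M).opcycles n).unop := ((HK P M).fromOpcycles n j).unop.hom

variable (P : ChainComplex (ModuleCat.{0} R) ℕ) (M : ModuleCat.{0} R) (n j : ℕ)

lemma zI_inj : Function.Injective (zI P M n) := by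
  have : Mono ((HK P M).pOpcycles n).unop := inferInstance
  exact (ModuleCat.mono_iff_injective _).1 this

lemma zP_surj : Function.Surjective (zP P M n) := by
  have : Epi ((HK P M).homologyι n).unop := inferInstance
  exact (ModuleCat.epi_iff_surjective _).1 this

lemma zI_zB (g : P.X j ⟶ M) : zI P M n (zB P M n j g) = P.d n j ≫ g := by
  have h := congrArg Quiver.Hom.unop ((HK P M).p_fromOpcycles n j)
  have h2 := congrArg (fun φ => φ.hom g) h
  exact h2

lemma zI_coc (z) : P.d (n+1) n ≫ zI P M n z = 0 := by
  have h := congrArg Quiver.Hom.unop ((HK P M).d_pOpcycles (n+1) n)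
  have h2 := congrArg (fun φ => φ.hom z) h
  exact h2

lemma zI_surj (f : P.X n ⟶ M) (hf : P.d (n+1) n ≫ f = 0) : ∃ z, zI P M n z = f := by
  have h : (ShortComplex.mk _ _ ((HK P M).d_pOpcycles (n+1) n)).Exact := 
    ShortComplex.exact_of_g_is_cokernel _ ((HK P M).opcyclesIsCokernel (n+1) n (by simp))
  exact (ShortComplex.moduleCat_exact_iff _).1 h.unop f hf

lemma zP_eq_zero (z) (hj : (ComplexShape.down ℕ).next n = j) (hz : zP P M n z = 0) :
    ∃ g, zB P M n j g = z := by
  have h : (ShortComplex.mk _ _ ((HK P M).homologyι_comp_fromOpcycles n j)).Exact := 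
    ShortComplex.exact_of_f_is_kernel _ ((HK P M).homologyIsKernel n j hj)
  exact (ShortComplex.moduleCat_exact_iff _).1 h.unop z hz

lemma zP_zB (g) : zP P M n (zB P M n j g) = 0 := by
  have h := congrArg Quiver.Hom.unop ((HK P M).homologyι_comp_fromOpcycles n j)
  exact congrArg (fun φ => φ.hom g) h

/-- The old Ext. -/
abbrev OE (n : ℕ) (A M : ModuleCat.{0} R) : ModuleCat.{0} R :=
  ((Ext R (ModuleCat.{0} R) n).obj (.op A)).obj M

/-- transition on old ext. -/
abbrev OEmap (n : ℕ) {A B : ModuleCat.{0} R} (g : A ⟶ B) (M : ModuleCat.{0} R) :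
  OE n B M ⟶ OE n A M := ((Ext R (ModuleCat.{0} R) n).map g.op).app M

/-- iso. -/
def oI {A : ModuleCat.{0} R} (P : ProjectiveResolution A) (M : ModuleCat.{0} R) (n : ℕ) :
    ((HK P.complex M).homology n).unop →ₗ[R] OE n A M :=
  (P.isoLeftDerivedObj (HF M) n).unop.hom.hom

lemma oI_bij {A : ModuleCat.{0} R} (P : ProjectiveResolution A) (M : ModuleCat.{0} R) (n : ℕ) :
    Function.Bijective (oI P M n) :=
  (ConcreteCategory.isIso_iff_bijective (P.isoLeftDerivedObj (HF M) n).unop.hom).1 inferInstance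

/-- The relation `f represents e`. -/
def Rel {A : ModuleCat.{0} R} (P : ProjectiveResolution A) (M : ModuleCat.{0} R) (n : ℕ)
    (f : P.complex.X n ⟶ M) (e : OE n A M) : Prop :=
  ∃ z, zI P.complex M n z = f ∧ oI P M n (zP P.complex M n z) = e

variable {A B : ModuleCat.{0} R} {P : ProjectiveResolution A} {Q : ProjectiveResolution B}
  {M : ModuleCat.{0} R} {n : ℕ}

lemma Rel.exists_left (e : OE n A M) : ∃ f, P.complex.d (n+1) n ≫ f = 0 ∧ Rel P M n f e := by
  obtain ⟨h, rfl⟩ := (oI_bij P M n).2 e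
  obtain ⟨z, rfl⟩ := zP_surj _ _ _ h
  exact ⟨_, zI_coc _ _ _ z, z, rfl, rfl⟩

lemma Rel.exists_right (f : P.complex.X n ⟶ M) (hf : P.complex.d (n+1) n ≫ f = 0) :
    ∃ e, Rel P M n f e := by
  obtain ⟨z, rfl⟩ := zI_surj _ _ _ f hf
  exact ⟨_, z, rfl, rfl⟩

lemma Rel.smul {f e} (h : Rel P M n f e) (r : R) : Rel P M n (r • f) (r • e) := by
  obtain ⟨z, rfl, rfl⟩ := h
  exact ⟨r • z, by simp, by simp⟩

lemma Rel.eq_zero_iff {f e} (h : Rel P M n f e) :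
    e = 0 ↔ ∃ g, P.complex.d n ((ComplexShape.down ℕ).next n) ≫ g = f := by
  obtain ⟨z, rfl, rfl⟩ := h
  constructor
  · intro h
    obtain ⟨g, hg⟩ := zP_eq_zero _ _ _ _ z rfl ((oI_bij P M n).1 (h.trans (map_zero (oI P M n)).symm))
    exact ⟨g, by rw [← hg, zI_zB]⟩
  · rintro ⟨g, hg⟩
    rw [← zI_zB] at hg
    rw [← zI_inj _ _ _ hg, zP_zB, _root_.map_zero]

lemma Rel.map {g : A ⟶ B} (φ : P.Hom Q g) {f e} (h : Rel Q M n f e) :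
    Rel P M n (φ.hom.f n ≫ f) ((OEmap n g M).hom e) := by
  obtain ⟨z, rfl, rfl⟩ := h
  let ψ : HK P.complex M ⟶ HK Q.complex M := ((HF M).mapHomologicalComplex _).map φ.hom
  refine ⟨(HomologicalComplex.opcyclesMap ψ n).unop.hom z, ?_, ?_⟩
  · have h := congrArg Quiver.Hom.unop (HomologicalComplex.p_opcyclesMap ψ n)
    exact congrArg (fun φ => φ.hom z) h
  · have h := congrArg Quiver.Hom.unop (HomologicalComplex.homologyι_naturality ψ n)
    have h1 := congrArg (fun φ => φ.hom z) h
    have h3 := congrArg Quiver.Hom.unop (ProjectiveResolution.isoLeftDerivedObj_hom_naturality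
      g P Q φ.hom φ.hom_f_zero_comp_π_f_zero (HF M) n)
    have h4 := congrArg (fun φ' => φ'.hom (zP Q.complex M n z)) h3
    refine Eq.trans ?_ h4.symm
    exact congrArg (oI P M n) h1.symm

/-! new Ext -/
lemma extMk_zero_iff (f : P.complex.X n ⟶ M) (hf : P.complex.d (n+1) n ≫ f = 0) :
    P.extMk f (n+1) rfl hf = 0 ↔
      ∃ g, P.complex.d n ((ComplexShape.down ℕ).next n) ≫ g = f := by
  rcases n with _ | n
  · have : P.complex.d 0 ((ComplexShape.down ℕ).next 0) = 0 := P.complex.shape _ _ (by simp)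
    simp only [this, Limits.zero_comp, ← P.extEquivCohomologyClass.apply_eq_iff_eq,
      ProjectiveResolution.extEquivCohomologyClass_extMk,
      ProjectiveResolution.extEquivCohomologyClass_zero,
      CochainComplex.HomComplex.CohomologyClass.mk_eq_zero_iff]
    rw [CochainComplex.HomComplex.Cocycle.toSingleMk_mem_coboundaries_iff _ _ _ _ _ 1 (by simp)]
    have hz : Limits.IsZero (P.cochainComplex.X 1) := P.cochainComplex.isZero_of_isStrictlyLE 0 1
    constructor
    · rintro ⟨g, hg⟩
      rw [hz.eq_of_src g 0, Limits.comp_zero] at hg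
      refine ⟨0, ?_⟩
      rw [← cancel_epi (P.cochainComplexXIso (-(0:ℕ)) 0 rfl).hom, ← hg]; simp
    · rintro ⟨g, hg⟩
      exact ⟨0, by rw [← hg]; simp⟩
  · rw [P.extMk_eq_zero_iff f (n+2) rfl hf n rfl]
    have : (ComplexShape.down ℕ).next (n+1) = n := by simp
    rw [this]

end LHTheory

namespace LHTheory
variable {A B : ModuleCat.{0} R} {M : ModuleCat.{0} R} {n : ℕ}

/-- chosen resolution -/
def pr (A : ModuleCat.{0} R) : ProjectiveResolution A := projectiveResolution A

/-- A lift of a morphism. -/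
def prHom (g : A ⟶ B) : (pr A).Hom (pr B) g where
  hom := ProjectiveResolution.lift g _ _
  hom_f_zero_comp_π_f_zero := ProjectiveResolution.lift_commutes_zero g _ _

/-- Cocycle-level condition. -/
def CB (M : ModuleCat.{0} R) (n : ℕ) (A : ModuleCat.{0} R) (f : (pr A).complex.X n ⟶ M) : Prop :=
  ∃ g, (pr A).complex.d n ((ComplexShape.down ℕ).next n) ≫ g = f

lemma old_iff (I : Ideal R) (r : R) (t : ℕ) :
    (∀ e : OE n (QP I t) M, ∃ u, ∃ h : t ≤ u, (OEmap n (tr I h) M).hom (r • e) = 0) ↔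
    ∀ f : (pr (QP I t)).complex.X n ⟶ M, (pr (QP I t)).complex.d (n+1) n ≫ f = 0 →
      ∃ u, ∃ h : t ≤ u, CB M n (QP I u) ((prHom (tr I h)).hom.f n ≫ (r • f)) := by
  constructor
  · intro H f hf
    obtain ⟨e, he⟩ := Rel.exists_right f hf
    obtain ⟨u, h, hu⟩ := H e
    exact ⟨u, h, (((he.smul r).map (prHom (tr I h))).eq_zero_iff).1 hu⟩
  · intro H e
    obtain ⟨f, hf, he⟩ := Rel.exists_left (P := pr (QP I t)) e
    obtain ⟨u, h, hu⟩ := H f hf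
    exact ⟨u, h, (((he.smul r).map (prHom (tr I h))).eq_zero_iff).2 hu⟩

lemma smul_extMk {P : ProjectiveResolution A} (r : R) (f : P.complex.X n ⟶ M)
    (hf : P.complex.d (n+1) n ≫ f = 0) :
    r • P.extMk f (n+1) rfl hf = P.extMk (r • f) (n+1) rfl (by simp [hf]) := by
  have := P.extMk_comp_mk₀ f (n+1) rfl hf (r • 𝟙 M)
  rw [Abelian.Ext.mk₀_smul] at this
  simpa using this

lemma new_iff (I : Ideal R) (r : R) (t : ℕ) :
    (∀ e : Abelian.Ext.{0} (QP I t) M n, ∃ u, ∃ h : t ≤ u, trExt I n M t u h (r • e) = 0) ↔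
    ∀ f : (pr (QP I t)).complex.X n ⟶ M, (pr (QP I t)).complex.d (n+1) n ≫ f = 0 →
      ∃ u, ∃ h : t ≤ u, CB M n (QP I u) ((prHom (tr I h)).hom.f n ≫ (r • f)) := by
  constructor
  · intro H f hf
    obtain ⟨u, h, hu⟩ := H ((pr (QP I t)).extMk f (n+1) rfl hf)
    refine ⟨u, h, ?_⟩
    rw [trExt_apply, smul_extMk, ProjectiveResolution.mk₀_comp_extMk _ _ _ _ (prHom (tr I h)),
      extMk_zero_iff] at hu
    exact hu
  · intro H e
    obtain ⟨f, hf, rfl⟩ := (pr (QP I t)).extMk_surjective e (n+1) rfl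
    obtain ⟨u, h, hu⟩ := H f hf
    refine ⟨u, h, ?_⟩
    rw [trExt_apply, smul_extMk, ProjectiveResolution.mk₀_comp_extMk _ _ _ _ (prHom (tr I h)),
      extMk_zero_iff]
    exact hu

lemma LH_kill_iff (I : Ideal R) (r : R) :
    (∀ z : LH I n M, r • z = 0) ↔ ∀ t, ∀ e : Abelian.Ext.{0} (QP I t) M n,
      ∃ u, ∃ h : t ≤ u, trExt I n M t u h (r • e) = 0 := by
  constructor
  · intro H t e
    have := H (of I n M t e)
    rwa [← _root_.map_smul, of_eq_zero_iff] at this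
  · intro H z
    obtain ⟨t, e, rfl⟩ := exists_of z
    rw [← _root_.map_smul, of_eq_zero_iff]
    exact H t e

open Limits Opposite in
lemma colim_aux {F : ℕᵒᵖᵒᵖ ⥤ ModuleCat.{0} R} {c : Cocone F} (hc : IsColimit c) (t : ℕᵒᵖᵒᵖ)
    (e : F.obj t) (h : (c.ι.app t).hom e = 0) : ∃ u, ∃ f : t ⟶ u, (F.map f).hom e = 0 := by
  have h' : c.ι.app t e = c.ι.app t 0 := by
    rw [_root_.map_zero]; exact h
  obtain ⟨k, f, g, hfg⟩ := Concrete.isColimit_exists_of_rep_eq F hc e 0 h'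
  rw [_root_.map_zero] at hfg
  exact ⟨k, f, hfg⟩

open Limits Opposite in
lemma colim_aux2 {F : ℕᵒᵖᵒᵖ ⥤ ModuleCat.{0} R} {c : Cocone F} (hc : IsColimit c) (z : c.pt) :
    ∃ t : ℕ, ∃ e : F.obj (op (op t)), (c.ι.app _).hom e = z := by
  obtain ⟨⟨⟨t⟩⟩, e, he⟩ := Concrete.isColimit_exists_rep F hc z
  exact ⟨t, e, he⟩

open Limits Opposite in
lemma locH_kill_iff (I : Ideal R) (r : R) :
    (∀ z : (localCohomology I n).obj M, r • z = 0) ↔ ∀ t, ∀ e : OE n (QP I t) M,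
      ∃ u, ∃ h : t ≤ u, (OEmap n (tr I h) M).hom (r • e) = 0 := by
  have := localCohomology.hasColimitDiagram.{0,0} (localCohomology.idealPowersDiagram I) n
  let D := localCohomology.diagram (localCohomology.idealPowersDiagram I) n
  let c : Cocone (D ⋙ (evaluation _ _).obj M) := ((evaluation _ _).obj M).mapCocone (colimit.cocone D)
  have hc : IsColimit c := isColimitOfPreserves _ (colimit.isColimit D)
  let ℓ : (t : ℕ) → (OE n (QP I t) M →ₗ[R] (localCohomology I n).obj M) :=
    fun t => (c.ι.app (op (op t))).hom
  have key : ∀ (t : ℕ) (e : OE n (QP I t) M), ℓ t e = 0 ↔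
      ∃ u, ∃ h : t ≤ u, (OEmap n (tr I h) M).hom e = 0 := by
    intro t e
    constructor
    · intro h
      obtain ⟨⟨⟨u⟩⟩, f, hf⟩ := colim_aux hc (op (op t)) e h
      exact ⟨u, f.unop.unop.le, hf⟩
    · rintro ⟨u, h, hu⟩
      have hn := c.w (homOfLE h).op.op
      have hn2 := congrArg (fun φ => φ.hom e) hn
      have hn3 : ℓ u ((OEmap n (tr I h) M).hom e) = ℓ t e := hn2
      rw [← hn3, hu, _root_.map_zero]
  constructor
  · intro H t e
    rw [← key, _root_.map_smul]
    exact H _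
  · intro H z
    obtain ⟨t, e, he⟩ := colim_aux2 hc z
    have h1 : ∀ e : OE n (QP I t) M, r • ℓ t e = 0 := fun e => by
      rw [← _root_.map_smul, key]; exact H t e
    rw [← he]
    exact h1 e

theorem bridge (I : Ideal R) (r : R) :
    (∀ z : (localCohomology I n).obj M, r • z = 0) ↔ ∀ z : LH I n M, r • z = 0 := by
  rw [LH_kill_iff, locH_kill_iff]
  simp only [old_iff, new_iff]

end LHTheory

namespace LHTheory

section sesDef
variable {A B C : Type} [AddCommGroup A] [AddCommGroup B] [AddCommGroup C]
  [Module R A] [Module R B] [Module R C]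

/-- local cohomology of an unbundled module. -/
abbrev HL (I : Ideal R) (i : ℕ) (M : Type) [AddCommGroup M] [Module R M] : Type :=
  LH I i (ModuleCat.of R M)

/-- induced maps -/
abbrev mapL (I : Ideal R) (i : ℕ) (f : A →ₗ[R] B) : HL I i A →ₗ[R] HL I i B :=
  map I i (ModuleCat.ofHom f)

lemma mapL_comp (I : Ideal R) (i : ℕ) (g : B →ₗ[R] C) (f : A →ₗ[R] B) (z) :
    mapL I i (g ∘ₗ f) z = mapL I i g (mapL I i f z) := by
  rw [← map_comp]; rfl

lemma mapL_smul (I : Ideal R) (i : ℕ) (r : R) (z : HL I i A) :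
    mapL I i (r • LinearMap.id : A →ₗ[R] A) z = r • z := by
  have := map_smul_hom r (𝟙 (ModuleCat.of R A)) z
  rw [map_id] at this
  exact this

/-- Short complex -/
def ses (f : A →ₗ[R] B) (g : B →ₗ[R] C) (h : Function.Exact f g) :
    ShortComplex (ModuleCat.{0} R) :=
  ShortComplex.mk (ModuleCat.ofHom f) (ModuleCat.ofHom g) (by
    ext x; exact h.apply_apply_eq_zero x)

lemma ses_shortExact (f : A →ₗ[R] B) (g : B →ₗ[R] C) (h : Function.Exact f g)
    (hf : Function.Injective f) (hg : Function.Surjective g) : (ses f g h).ShortExact where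
  exact := by
    rw [ShortComplex.moduleCat_exact_iff]
    intro x hx
    exact (h x).1 hx
  mono_f := (ModuleCat.mono_iff_injective _).2 hf
  epi_g := (ModuleCat.epi_iff_surjective _).2 hg

/-- Connecting homomorphism. -/
def dl (I : Ideal R) (i : ℕ) (f : A →ₗ[R] B) (g : B →ₗ[R] C) (h : Function.Exact f g)
    (hf : Function.Injective f) (hg : Function.Surjective g) : HL I i C →ₗ[R] HL I (i+1) A :=
  δ (ses_shortExact f g h hf hg) I i

variable {I : Ideal R} {i : ℕ} {f : A →ₗ[R] B} {g : B →ₗ[R] C} (h : Function.Exact f g)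
    (hf : Function.Injective f) (hg : Function.Surjective g)

lemma ex₂ (h : Function.Exact f g) (hf : Function.Injective f) (hg : Function.Surjective g)
    (z : HL I i B) (hz : mapL I i g z = 0) : ∃ y, mapL I i f y = z :=
  exact₂ (ses_shortExact f g h hf hg) z hz

lemma ex₃ (z : HL I i C) (hz : dl I i f g h hf hg z = 0) : ∃ y, mapL I i g y = z :=
  exact₃ (ses_shortExact f g h hf hg) z hz

lemma ex₁ (z : HL I (i+1) A) (hz : mapL I (i+1) f z = 0) : ∃ y, dl I i f g h hf hg y = z :=
  exact₁ (ses_shortExact f g h hf hg) z hz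

lemma dl_map (z : HL I i B) : dl I i f g h hf hg (mapL I i g z) = 0 :=
  δ_map_g (ses_shortExact f g h hf hg) z

lemma map_dl (z : HL I i C) : mapL I (i+1) f (dl I i f g h hf hg z) = 0 :=
  map_f_δ (ses_shortExact f g h hf hg) z

lemma dl_nat {A' B' C' : Type} [AddCommGroup A'] [AddCommGroup B'] [AddCommGroup C']
    [Module R A'] [Module R B'] [Module R C']
    {f' : A' →ₗ[R] B'} {g' : B' →ₗ[R] C'} (h' : Function.Exact f' g')
    (hf' : Function.Injective f') (hg' : Function.Surjective g')
    (α : A →ₗ[R] A') (β : B →ₗ[R] B') (γ : C →ₗ[R] C')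
    (h1 : f' ∘ₗ α = β ∘ₗ f) (h2 : g' ∘ₗ β = γ ∘ₗ g) (z : HL I i C) :
    mapL I (i+1) α (dl I i f g h hf hg z) = dl I i f' g' h' hf' hg' (mapL I i γ z) :=
  δ_nat (ses_shortExact f g h hf hg) (ses_shortExact f' g' h' hf' hg')
    (ShortComplex.homMk (ModuleCat.ofHom α) (ModuleCat.ofHom β) (ModuleCat.ofHom γ)
      (by apply ModuleCat.hom_ext; exact h1) (by apply ModuleCat.hom_ext; exact h2)) z
end sesDef

/-- The torsion submodule. -/
def tors (I : Ideal R) (M : Type) [AddCommGroup M] [Module R M] : Submodule R M where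
  carrier := {m | ∃ t : ℕ, ∀ r ∈ I ^ t, r • m = 0}
  zero_mem' := ⟨0, by simp⟩
  add_mem' := by
    rintro a b ⟨s, hs⟩ ⟨t, ht⟩
    refine ⟨s + t, fun r hr => ?_⟩
    rw [smul_add, hs r (Ideal.pow_le_pow_right (by omega) hr),
      ht r (Ideal.pow_le_pow_right (by omega) hr), add_zero]
  smul_mem' := by
    rintro c a ⟨s, hs⟩
    exact ⟨s, fun r hr => by rw [smul_comm, hs r hr, smul_zero]⟩

variable {I : Ideal R}

lemma mem_tors {M : Type} [AddCommGroup M] [Module R M] {m : M} :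
    m ∈ tors I M ↔ ∃ t : ℕ, ∀ r ∈ I ^ t, r • m = 0 := Iff.rfl

/-- `I`-torsion modules. -/
def IsTors (I : Ideal R) (M : Type) [AddCommGroup M] [Module R M] : Prop :=
  ∀ m : M, ∃ t : ℕ, ∀ r ∈ I ^ t, r • m = 0

lemma isTors_tors {M : Type} [AddCommGroup M] [Module R M] : IsTors I (tors I M) := by
  rintro ⟨m, t, ht⟩
  exact ⟨t, fun r hr => Subtype.ext (ht r hr)⟩

lemma IsTors.exists_pow {M : Type} [AddCommGroup M] [Module R M] [Module.Finite R M]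
    (h : IsTors I M) : ∃ t : ℕ, ∀ r ∈ I ^ t, ∀ m : M, r • m = 0 := by
  obtain ⟨S, hS⟩ := (Module.finite_def (R := R) (M := M)).1 inferInstance
  choose T hT using h
  refine ⟨S.sup T, fun r hr m => ?_⟩
  have hm : m ∈ Submodule.span R (S : Set M) := by rw [hS]; trivial
  induction hm using Submodule.span_induction with
  | mem x hx => exact hT x r (Ideal.pow_le_pow_right (Finset.le_sup hx) hr)
  | zero => simp
  | add x y _ _ h1 h2 => rw [smul_add, h1, h2, add_zero]
  | smul a x _ h1 => rw [smul_comm, h1, smul_zero]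

lemma IsTors.of_surj {M N : Type} [AddCommGroup M] [Module R M] [AddCommGroup N] [Module R N]
    (h : IsTors I M) (f : M →ₗ[R] N) (hf : Function.Surjective f) : IsTors I N := by
  intro n
  obtain ⟨m, rfl⟩ := hf n
  obtain ⟨t, ht⟩ := h m
  exact ⟨t, fun r hr => by rw [← _root_.map_smul, ht r hr, _root_.map_zero]⟩

lemma IsTors.of_inj {M N : Type} [AddCommGroup M] [Module R M] [AddCommGroup N] [Module R N]
    (h : IsTors I N) (f : M →ₗ[R] N) (hf : Function.Injective f) : IsTors I M := by
  intro m
  obtain ⟨t, ht⟩ := h (f m)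
  exact ⟨t, fun r hr => hf (by rw [_root_.map_smul, ht r hr, _root_.map_zero])⟩

variable [IsNoetherianRing R]

lemma tors_injective (E : Type) [AddCommGroup E] [Module R E] [hE : Module.Injective R E] :
    Module.Injective R (tors I E) := by
  apply Module.Baer.injective
  intro J g
  have hfin : Module.Finite R J := inferInstance
  have ht : ∃ t : ℕ, ∀ r ∈ I ^ t, ∀ j : J, g (r • j) = 0 := by
    have : IsTors I (LinearMap.range g) :=
      (isTors_tors (I := I) (M := E)).of_inj (LinearMap.range g).subtype Subtype.val_injective
    obtain ⟨t, ht⟩ := this.exists_pow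
    refine ⟨t, fun r hr j => ?_⟩
    have := ht r hr ⟨g j, j, rfl⟩
    rw [_root_.map_smul]
    exact congrArg Subtype.val this
  obtain ⟨t, ht⟩ := ht
  obtain ⟨k, hk⟩ := Ideal.exists_pow_inf_eq_pow_smul I (J : Submodule R R)
  have hk' := hk (t + k) (by omega)
  let φ : J →ₗ[R] (R ⧸ I ^ (t + k)) := (I ^ (t+k)).mkQ ∘ₗ J.subtype
  have hφ : LinearMap.ker φ ≤ LinearMap.ker ((tors I E).subtype ∘ₗ g) := by
    intro j hj
    have hj1 : (j : R) ∈ I ^ (t+k) := by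
      exact (Submodule.Quotient.mk_eq_zero (I ^ (t+k))).1 hj
    have hj2 : (j : R) ∈ I ^ (t + k) • (⊤ : Submodule R R) ⊓ J := ⟨by simpa using hj1, j.2⟩
    rw [hk', Nat.add_sub_cancel] at hj2
    have hj3 : (j : R) ∈ I ^ t • J := smul_mono_right (I ^ t) (inf_le_right : _ ≤ (J : Submodule R R)) hj2
    have : ∀ x ∈ I ^ t • (J : Submodule R R), ∃ hx : x ∈ J, g ⟨x, hx⟩ = 0 := by
      intro x hx
      refine Submodule.smul_induction_on hx ?_ ?_
      · intro r hr n hn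
        exact ⟨J.mul_mem_left r hn, ht r hr ⟨n, hn⟩⟩
      · rintro x y ⟨hx, hx'⟩ ⟨hy, hy'⟩
        refine ⟨J.add_mem hx hy, ?_⟩
        have : (⟨x + y, J.add_mem hx hy⟩ : J) = ⟨x, hx⟩ + ⟨y, hy⟩ := rfl
        rw [this, _root_.map_add, hx', hy', add_zero]
    obtain ⟨_, h⟩ := this _ hj3
    simp only [LinearMap.mem_ker, LinearMap.comp_apply]
    rw [show j = ⟨(j:R), j.2⟩ from rfl, h, _root_.map_zero]
  obtain ⟨h, hh⟩ := hE.out ((LinearMap.ker φ).liftQ φ le_rfl)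
    (LinearMap.ker_eq_bot.1 (Submodule.ker_liftQ_eq_bot _ _ _ le_rfl))
    ((LinearMap.ker φ).liftQ _ hφ)
  have hh' : ∀ j : J, h (Submodule.Quotient.mk (j : R)) = g j := fun j =>
    hh (Submodule.Quotient.mk j)
  have hmem : h (Submodule.Quotient.mk (1 : R)) ∈ tors I E := by
    refine ⟨t + k, fun r hr => ?_⟩
    rw [← _root_.map_smul, ← Submodule.Quotient.mk_smul, (Submodule.Quotient.mk_eq_zero _).2,
      _root_.map_zero]
    simpa using hr
  refine ⟨LinearMap.toSpanSingleton R _ ⟨_, hmem⟩, ?_⟩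
  intro x hx
  apply Subtype.ext
  rw [← hh' ⟨x, hx⟩]
  simp only [LinearMap.toSpanSingleton_apply, Submodule.coe_smul]
  rw [← _root_.map_smul, ← Submodule.Quotient.mk_smul]
  simp

theorem vanish (i : ℕ) : ∀ (T : Type) [AddCommGroup T] [Module R T], IsTors I T →
    ∀ z : HL I (i+1) T, z = 0 := by
  induction i with
  | zero =>
    intro T _ _ hT z
    let E : ModuleCat.{0} R := Injective.under (ModuleCat.of R T)
    have hE : Module.Injective R E :=
      (Module.injective_iff_injective_object R E).2 (inferInstanceAs (Injective E))
    let j : T →ₗ[R] tors I E := LinearMap.codRestrict _ (Injective.ι (ModuleCat.of R T)).hom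
      (fun x => by
        obtain ⟨t, ht⟩ := hT x
        exact ⟨t, fun r hr => by
          rw [← _root_.map_smul, ht r hr, _root_.map_zero]⟩)
    have hj : Function.Injective j := by
      intro a b hab
      exact (ModuleCat.mono_iff_injective (Injective.ι (ModuleCat.of R T))).1 inferInstance
        (congrArg Subtype.val hab)
    have hE' := tors_injective (I := I) E
    have hinj : Injective (ModuleCat.of R (tors I E)) :=
      (Module.injective_iff_injective_object R _).1 hE'
    have hex : Function.Exact j (LinearMap.range j).mkQ := by
      rw [LinearMap.exact_iff]; simp
    obtain ⟨y, rfl⟩ := ex₁ hex hj (Submodule.mkQ_surjective _) z (subsingleton_of_injective _)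
    obtain ⟨e, he⟩ := Submodule.mkQ_surjective _ (ev0 I _ y)
    obtain ⟨t, ht⟩ := isTors_tors (I := I) e
    obtain ⟨y', hy'⟩ := ev0_surj (M := ModuleCat.of R (tors I E)) e t ht
    have : y = mapL I 0 (LinearMap.range j).mkQ y' := by
      apply ev0_injective
      rw [ev0_nat, hy', ← he]
      rfl
    rw [this, dl_map]
  | succ i ih =>
    intro T _ _ hT z
    let E : ModuleCat.{0} R := Injective.under (ModuleCat.of R T)
    have hE : Module.Injective R E :=
      (Module.injective_iff_injective_object R E).2 (inferInstanceAs (Injective E))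
    let j : T →ₗ[R] tors I E := LinearMap.codRestrict _ (Injective.ι (ModuleCat.of R T)).hom
      (fun x => by
        obtain ⟨t, ht⟩ := hT x
        exact ⟨t, fun r hr => by
          rw [← _root_.map_smul, ht r hr, _root_.map_zero]⟩)
    have hj : Function.Injective j := by
      intro a b hab
      exact (ModuleCat.mono_iff_injective (Injective.ι (ModuleCat.of R T))).1 inferInstance
        (congrArg Subtype.val hab)
    have hE' := tors_injective (I := I) E
    have hinj : Injective (ModuleCat.of R (tors I E)) :=
      (Module.injective_iff_injective_object R _).1 hE'
    have hex : Function.Exact j (LinearMap.range j).mkQ := by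
      rw [LinearMap.exact_iff]; simp
    obtain ⟨y, rfl⟩ := ex₁ hex hj (Submodule.mkQ_surjective _) z (subsingleton_of_injective _)
    rw [ih _ (isTors_tors.of_surj _ (Submodule.mkQ_surjective _)) y, _root_.map_zero]

/-- Modding out by a torsion kernel does not change higher local cohomology. -/
theorem mapL_bij {M N : Type} [AddCommGroup M] [Module R M] [AddCommGroup N] [Module R N]
    (f : M →ₗ[R] N) (hf : Function.Surjective f) (hT : IsTors I (LinearMap.ker f)) (i : ℕ) :
    Function.Bijective (mapL I (i+1) f) := by
  have hex : Function.Exact (LinearMap.ker f).subtype f := by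
    rw [LinearMap.exact_iff]; simp
  constructor
  · rw [injective_iff_map_eq_zero]
    intro z hz
    obtain ⟨y, rfl⟩ := ex₂ hex Subtype.val_injective hf z hz
    rw [vanish i _ hT y, _root_.map_zero]
  · intro z
    exact ex₃ hex Subtype.val_injective hf z (vanish (i+1) _ hT _)

end LHTheory

namespace LHTheory

/-- `I^t` kills the local cohomology in degrees below `k`. -/
def Kill (t : ℕ) (I : Ideal R) (M : Type) [AddCommGroup M] [Module R M] (k : ℕ) : Prop :=
  ∀ i < k, ∀ r ∈ I ^ t, ∀ z : HL I i M, r • z = 0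

lemma mapL_sum_smul {A B : Type} [AddCommGroup A] [AddCommGroup B] [Module R A] [Module R B]
    {I : Ideal R} {i : ℕ} {ι : Type} [Fintype ι] (c : ι → R) (f : ι → (A →ₗ[R] B)) (z : HL I i A) :
    mapL I i (∑ k, c k • f k) z = ∑ k, c k • mapL I i (f k) z := by
  have : ModuleCat.ofHom (∑ k, c k • f k) = ∑ k, c k • ModuleCat.ofHom (f k) := by
    apply ModuleCat.hom_ext
    simp [ModuleCat.hom_sum]
  rw [mapL, this, map_sum]
  simp [map_smul_hom]

lemma lemma_C {I : Ideal R} {H : Type} [AddCommGroup H] [Module R H] (x : R) (hx : x ∈ I ^ 2)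
    (hk : ∀ u : H, x • u = 0 → ∀ r ∈ I, r • u = 0) (u : H) (n : ℕ) (hu : x ^ n • u = 0) :
    ∀ r ∈ I, r • u = 0 := by
  have h2 : ∀ v : H, x • x • v = 0 → x • v = 0 := by
    intro v hv
    have h1 := hk _ hv
    have h3 : ∀ r ∈ I, ∀ s ∈ I, (r * s) • v = 0 := by
      intro r hr s hs
      rw [mul_smul]
      refine hk (s • v) ?_ r hr
      rw [smul_comm]; exact h1 s hs
    rw [pow_two] at hx
    refine Submodule.mul_induction_on hx (fun r hr s hs => h3 r hr s hs) ?_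
    intro a b ha hb
    rw [add_smul, ha, hb, add_zero]
  have h4 : ∀ n : ℕ, ∀ v : H, x ^ n • v = 0 → x • v = 0 := by
    intro n
    induction n with
    | zero => intro v hv; rw [pow_zero, one_smul] at hv; rw [hv, smul_zero]
    | succ n ih =>
      intro v hv
      apply h2
      apply ih
      rw [← mul_smul, ← pow_succ]; exact hv
  exact hk u (h4 n u hu)

section mult
variable {I : Ideal R} {M N : Type} [AddCommGroup M] [Module R M] [AddCommGroup N] [Module R N]

/-- multiplication by `x` -/
abbrev mu (M : Type) [AddCommGroup M] [Module R M] (x : R) : M →ₗ[R] M := x • LinearMap.id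

lemma tors_kill_of_Kill {t k : ℕ} (h : Kill t I M (k+1)) {m : M} (hm : m ∈ tors I M) (r : R)
    (hr : r ∈ I ^ t) : r • m = 0 := by
  obtain ⟨s, hs⟩ := hm
  obtain ⟨z, rfl⟩ := ev0_surj (M := ModuleCat.of R M) m s hs
  rw [← _root_.map_smul, h 0 (by omega) r hr z, _root_.map_zero]

variable [IsNoetherianRing R] (x : R)

lemma rr_bij (x : R) (hx0 : ∀ m : M, x • m = 0 → m ∈ tors I M)
    (i : ℕ) : Function.Bijective (mapL I (i+1) (mu M x).rangeRestrict) := by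
  apply mapL_bij _ (LinearMap.surjective_rangeRestrict _)
  rintro ⟨m, hm⟩
  obtain ⟨t, ht⟩ := hx0 m (by
    have := congrArg Subtype.val hm
    simpa using this)
  exact ⟨t, fun r hr => Subtype.ext (ht r hr)⟩

lemma hex (x : R) (q : M →ₗ[R] N) (hq : LinearMap.range (mu M x) = LinearMap.ker q) :
    Function.Exact (LinearMap.range (mu M x)).subtype q := by
  rw [LinearMap.exact_iff]; simp [hq]

lemma mapL_mu (i : ℕ) (w : HL I i M) :
    mapL I i (LinearMap.range (mu M x)).subtype (mapL I i (mu M x).rangeRestrict w) = x • w := by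
  rw [← mapL_comp, ← mapL_smul]
  rfl

lemma crude (x : R) (hx0 : ∀ m : M, x • m = 0 → m ∈ tors I M)
    (q : M →ₗ[R] N) (hqs : Function.Surjective q)
    (hq : LinearMap.range (mu M x) = LinearMap.ker q)
    {t k : ℕ} (h : Kill t I M (k+1)) : Kill (t + t) I N k := by
  intro i hi r hr z
  rw [pow_add] at hr
  refine Submodule.mul_induction_on hr ?_ ?_
  · intro r1 hr1 r2 hr2
    obtain ⟨w, hw⟩ := (rr_bij x hx0 i).2
      (dl I i _ _ (hex x q hq) Subtype.val_injective hqs z)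
    obtain ⟨u, hu⟩ := ex₃ (hex x q hq) Subtype.val_injective hqs (r2 • z) (by
      rw [_root_.map_smul, ← hw, ← _root_.map_smul, h (i+1) (by omega) r2 hr2, _root_.map_zero])
    rw [mul_smul, ← hu, ← _root_.map_smul, h i (by omega) r1 hr1, _root_.map_zero]
  · intro a b ha hb
    rw [add_smul, ha, hb, add_zero]

/-- kernel of multiplication on cohomology -/
lemma ker_mul (x : R) (hx0 : ∀ m : M, x • m = 0 → m ∈ tors I M)
    (q : M →ₗ[R] N) (hqs : Function.Surjective q)
    (hq : LinearMap.range (mu M x) = LinearMap.ker q)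
    {i : ℕ} (h : ∀ r ∈ I, ∀ z : HL I i N, r • z = 0) (u : HL I (i+1) M)
    (hu : x • u = 0) : ∀ r ∈ I, r • u = 0 := by
  intro r hr
  rw [← mapL_mu] at hu
  obtain ⟨z, hz⟩ := ex₁ (hex x q hq) Subtype.val_injective hqs _ hu
  apply (rr_bij x hx0 i).1
  rw [_root_.map_smul, ← hz, ← _root_.map_smul, h r hr, _root_.map_zero, _root_.map_zero]

lemma lemma_A (x : R) (hx0 : ∀ m : M, x • m = 0 → m ∈ tors I M)
    (q : M →ₗ[R] N) (hqs : Function.Surjective q)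
    (hq : LinearMap.range (mu M x) = LinearMap.ker q)
    (hx : x ∈ I ^ 2) {k : ℕ} (h : Kill 1 I M (k+1)) : Kill 1 I N k := by
  intro i hi r hr z
  rw [pow_one] at hr
  have h' : ∀ i < k + 1, ∀ r ∈ I, ∀ z : HL I i M, r • z = 0 := by
    simpa only [Kill, pow_one] using h
  rw [pow_two] at hx
  have hdec : ∃ (n : ℕ) (a b : Fin n → R), (∀ j, a j ∈ I) ∧ (∀ j, b j ∈ I) ∧
      x = ∑ j, a j * b j := by
    refine Submodule.mul_induction_on hx ?_ ?_
    · intro a ha b hb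
      exact ⟨1, fun _ => a, fun _ => b, fun _ => ha, fun _ => hb, by simp⟩
    · rintro u v ⟨n, a, b, ha, hb, rfl⟩ ⟨n', a', b', ha', hb', rfl⟩
      refine ⟨n + n', Fin.append a a', Fin.append b b', ?_, ?_, ?_⟩
      · intro j; refine Fin.addCases (fun j => ?_) (fun j => ?_) j <;> simp [ha, ha']
      · intro j; refine Fin.addCases (fun j => ?_) (fun j => ?_) j <;> simp [hb, hb']
      · simp [Fin.sum_univ_add]
  obtain ⟨n, a, b, ha, hb, hxe⟩ := hdec
  let β : M →ₗ[R] (Fin n → M) := ∑ j, b j • LinearMap.single R (fun _ => M) j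
  let α : (Fin n → M) →ₗ[R] M := ∑ j, a j • LinearMap.proj (R := R) (φ := fun _ => M) j
  have hβ : ∀ m j, β m j = b j • m := by
    intro m j
    simp [β, LinearMap.sum_apply, Finset.sum_apply, Pi.single_apply]
  have hα : ∀ m, α m = ∑ j, a j • m j := by
    intro m
    simp [α, LinearMap.sum_apply]
  have hαβ : ∀ m, α (β m) = x • m := by
    intro m
    simp only [hα, hβ, hxe, Finset.sum_smul, mul_smul]
  -- the row for β
  have hexB : Function.Exact (LinearMap.range β).subtype (LinearMap.range β).mkQ := by
    rw [LinearMap.exact_iff]; simp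
  let α' : LinearMap.range β →ₗ[R] LinearMap.range (mu M x) :=
    LinearMap.codRestrict _ (α ∘ₗ (LinearMap.range β).subtype) (by
      rintro ⟨_, m, rfl⟩
      exact ⟨m, (hαβ m).symm⟩)
  have hxq : ∀ m, q (x • m) = 0 := by
    intro m
    have : x • m ∈ LinearMap.ker q := hq ▸ ⟨m, rfl⟩
    exact this
  let γ : ((Fin n → M) ⧸ LinearMap.range β) →ₗ[R] N :=
    (LinearMap.range β).liftQ (q ∘ₗ α) (by
      rintro _ ⟨m, rfl⟩
      simp only [LinearMap.mem_ker, LinearMap.comp_apply, hαβ, hxq])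
  obtain ⟨w, hw⟩ := (rr_bij x hx0 i).2
      (dl I i _ _ (hex x q hq) Subtype.val_injective hqs z)
  obtain ⟨z', hz'⟩ := ex₁ hexB Subtype.val_injective (Submodule.mkQ_surjective _)
    (mapL I (i+1) β.rangeRestrict w) (by
      rw [← mapL_comp]
      change mapL I (i+1) β w = 0
      rw [mapL_sum_smul]
      apply Finset.sum_eq_zero
      intro j _
      rw [← _root_.map_smul, h' (i+1) (by omega) _ (hb j), _root_.map_zero])
  have hnat := dl_nat hexB Subtype.val_injective (Submodule.mkQ_surjective _) (hex x q hq)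
    Subtype.val_injective hqs α' α γ rfl rfl z'
  rw [hz', ← mapL_comp] at hnat
  have hcomp : α' ∘ₗ β.rangeRestrict = (mu M x).rangeRestrict := by
    ext m
    exact hαβ m
  rw [hcomp, hw] at hnat
  obtain ⟨u, hu⟩ := ex₃ (hex x q hq) Subtype.val_injective hqs (z - mapL I i γ z') (by
    rw [_root_.map_sub, hnat, sub_self])
  obtain ⟨y, hy⟩ := ex₃ hexB Subtype.val_injective (Submodule.mkQ_surjective _) (r • z') (by
    rw [_root_.map_smul, hz', ← _root_.map_smul, h' (i+1) (by omega) r hr, _root_.map_zero])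
  have hz : z = mapL I i γ z' + mapL I i q u := by rw [hu]; abel
  rw [hz, smul_add, ← _root_.map_smul, ← _root_.map_smul, h' i (by omega) r hr u, _root_.map_zero,
    add_zero, ← hy, ← mapL_comp]
  have : γ ∘ₗ (LinearMap.range β).mkQ = q ∘ₗ α := by
    exact Submodule.liftQ_mkQ _ _ _
  rw [this, mapL_comp, mapL_sum_smul, Finset.sum_eq_zero, _root_.map_zero]
  intro j _
  exact h' i (by omega) _ (ha j) _

end mult
end LHTheory

namespace LHTheory

/-- Coset prime avoidance. -/
lemma davis (x : R) (J : Ideal R) (S : Finset (Ideal R)) :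
    (∀ p ∈ S, p.IsPrime) → (∀ p ∈ S, x ∈ p → ¬ J ≤ p) → ∃ c ∈ J, ∀ p ∈ S, x + c ∉ p := by
  classical
  induction S using Finset.strongInduction with
  | H S ih =>
    intro hS hp
    rcases S.eq_empty_or_nonempty with rfl | hne
    · exact ⟨0, J.zero_mem, by simp⟩
    obtain ⟨p0, hp0, hmin⟩ := S.exists_minimal hne
    obtain ⟨c, hc, hcp⟩ := ih (S.erase p0) (Finset.erase_ssubset hp0)
      (fun p h => hS p (Finset.mem_of_mem_erase h)) (fun p h => hp p (Finset.mem_of_mem_erase h))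
    by_cases h0 : x + c ∈ p0
    · have hJ : ¬ J ≤ p0 := by
        intro hJ
        refine hp p0 hp0 ?_ hJ
        have := p0.sub_mem h0 (hJ hc)
        simpa using this
      have hprime := hS p0 hp0
      have hnot : ¬ J ⊓ (S.erase p0).inf id ≤ p0 := by
        rw [hprime.inf_le, hprime.inf_le']
        rintro (h | ⟨p, hpS, hpp⟩)
        · exact hJ h
        · exact (Finset.mem_erase.1 hpS).1
            (le_antisymm hpp (hmin (Finset.mem_of_mem_erase hpS) hpp))
      obtain ⟨d, ⟨hdJ, hdS⟩, hd⟩ := SetLike.not_le_iff_exists.1 hnot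
      refine ⟨c + d, J.add_mem hc hdJ, fun p hpS hmem => ?_⟩
      by_cases hpe : p = p0
      · subst hpe
        apply hd
        have := p.sub_mem hmem h0
        simpa [← add_assoc] using this
      · have hpe' : p ∈ S.erase p0 := Finset.mem_erase.2 ⟨hpe, hpS⟩
        have hdp : d ∈ p := (Finset.inf_le hpe' : (S.erase p0).inf id ≤ p) hdS
        apply hcp p hpe'
        have := p.sub_mem hmem hdp
        simpa [← add_assoc] using this
    · refine ⟨c, hc, fun p hpS => ?_⟩
      by_cases hpe : p = p0
      · subst hpe; exact h0
      · exact hcp p (Finset.mem_erase.2 ⟨hpe, hpS⟩)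

variable [IsNoetherianRing R] {I : Ideal R}

lemma filter_reg {M : Type} [AddCommGroup M] [Module R M] (y : R)
    (h : ∀ p ∈ associatedPrimes R M, ¬ I ≤ p → y ∉ p) (m : M) (hm : y • m = 0) :
    m ∈ tors I M := by
  let N := Submodule.span R {m}
  have hrad : I ≤ (Module.annihilator R N).radical := by
    rw [Ideal.radical_eq_sInf, ]
    rw [← Ideal.sInf_minimalPrimes.trans (Ideal.radical_eq_sInf _)]
    refine le_sInf fun p hp => ?_
    have hp1 := Module.associatedPrimes.minimalPrimes_annihilator_subset_associatedPrimes R N hp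
    have hp2 := associatedPrimes.subset_of_injective (f := N.subtype) Subtype.val_injective hp1
    by_contra hI
    refine h p hp2 hI (hp.1.2 ?_)
    rw [Module.mem_annihilator]
    rintro ⟨n, hn⟩
    obtain ⟨a, rfl⟩ := Submodule.mem_span_singleton.1 hn
    apply Subtype.ext
    change y • a • m = 0
    rw [smul_comm, hm, smul_zero]
  obtain ⟨t, ht⟩ := Ideal.exists_pow_le_of_le_radical_of_fg hrad (IsNoetherian.noetherian I)
  refine ⟨t, fun r hr => ?_⟩
  have := Module.mem_annihilator.1 (ht hr) ⟨m, Submodule.mem_span_singleton_self m⟩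
  exact congrArg Subtype.val this

lemma krull {M : Type} [AddCommGroup M] [Module R M] [Module.Finite R M] (y : R)
    (hy : y ∈ (⊥ : Ideal R).jacobson) (m : M)
    (h : ∀ n : ℕ, m ∈ LinearMap.range (mu M (y ^ n))) : m = 0 := by
  have := Ideal.iInf_pow_smul_eq_bot_of_le_jacobson (M := M) (Ideal.span {y})
    (by rw [Ideal.span_le]; simpa using hy)
  rw [← Submodule.mem_bot R, ← this, Submodule.mem_iInf]
  intro n
  obtain ⟨m', rfl⟩ := h n
  exact Submodule.smul_mem_smul (Ideal.pow_mem_pow (Ideal.mem_span_singleton_self y) n) trivial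

lemma lemma_B (hjac : I ≤ (⊥ : Ideal R).jacobson) (k : ℕ) : ∀ (t : ℕ) (M : Type)
    [AddCommGroup M] [Module R M] [Module.Finite R M] (x0 : R) (x : Fin k → R), x0 ∈ I →
    (∀ j, x j ∈ I) →
    I ≤ (Ideal.span {x0} ⊔ Ideal.span (Set.range x) ⊔ Module.annihilator R M).radical →
    Kill t I M (k+1) → ∀ m : M, x0 • m = 0 → m ∈ tors I M := by
  induction k with
  | zero =>
    intro t M _ _ _ x0 x hx0 hx hrad _ m hm
    obtain ⟨n, hn⟩ := Ideal.exists_pow_le_of_le_radical_of_fg hrad (IsNoetherian.noetherian I)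
    refine ⟨n, fun r hr => ?_⟩
    have h2 := hn hr
    simp only [Set.range_eq_empty, Ideal.span_empty, sup_bot_eq] at h2
    obtain ⟨a, ha, b, hb, rfl⟩ := Submodule.mem_sup.1 h2
    obtain ⟨c, rfl⟩ := Ideal.mem_span_singleton'.1 ha
    rw [add_smul, mul_smul, hm, smul_zero, Module.mem_annihilator.1 hb, add_zero]
  | succ k ih =>
    intro t M _ _ _ x0 x hx0 hx hrad hkill m hm
    let J : Ideal R := Ideal.span {x0} ⊔ Ideal.span (Set.range (Fin.tail x))
    have hJI : J ≤ I := by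
      refine sup_le ?_ ?_
      · rw [Ideal.span_le]; simpa using hx0
      · rw [Ideal.span_le]; rintro _ ⟨j, rfl⟩; exact hx _
    have hfin : (associatedPrimes R M).Finite := associatedPrimes.finite R M
    classical
    obtain ⟨c, hc, hcp⟩ := davis (x 0) J (hfin.toFinset.filter (fun p => ¬ I ≤ p))
      (by
        intro p hp
        have := (Finset.mem_filter.1 hp).1
        exact ((hfin.mem_toFinset).1 this).isPrime) (by
        intro p hp hxp hJp
        obtain ⟨hp1, hp2⟩ := Finset.mem_filter.1 hp
        have hpa := (hfin.mem_toFinset).1 hp1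
        have hprime : p.IsPrime := hpa.isPrime
        apply hp2
        refine hrad.trans (hprime.radical_le_iff.2 ?_)
        refine sup_le (sup_le (le_sup_left.trans hJp) ?_) ?_
        · rw [Ideal.span_le]
          rintro _ ⟨j, rfl⟩
          refine Fin.cases hxp (fun j => ?_) j
          exact hJp ((le_sup_right : _ ≤ J) (Ideal.subset_span ⟨j, rfl⟩))
        · have := IsAssociatedPrime.annihilator_le hpa
          rwa [Submodule.annihilator_top] at this)
    set y := x 0 + c with hy
    have hyI : y ∈ I := I.add_mem (hx 0) (hJI hc)
    refine ⟨t + t, fun r hr => ?_⟩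
    apply krull y (hjac hyI)
    intro n
    rcases Nat.eq_zero_or_pos n with rfl | hn
    · exact ⟨r • m, by simp⟩
    let q := (LinearMap.range (mu M (y ^ n))).mkQ
    have hreg : ∀ m : M, y ^ n • m = 0 → m ∈ tors I M := by
      apply filter_reg
      intro p hp hI hyp
      have hprime : p.IsPrime := hp.isPrime
      exact hcp p (Finset.mem_filter.2 ⟨hfin.mem_toFinset.2 hp, hI⟩) (hprime.mem_of_pow_mem n hyp)
    have hK : Kill (t + t) I (M ⧸ LinearMap.range (mu M (y ^ n))) (k+1) :=
      crude (y ^ n) hreg q (Submodule.mkQ_surjective _) (Submodule.ker_mkQ _).symm hkill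
    have hmem := ih (t + t) (M ⧸ LinearMap.range (mu M (y ^ n))) x0 (Fin.tail x) hx0
      (fun j => hx _) (by
        set A := Module.annihilator R (M ⧸ LinearMap.range (mu M (y ^ n)))
        refine hrad.trans (Ideal.radical_le_radical_iff.2 ?_)
        have hyA : y ^ n ∈ A := by
          rw [Module.mem_annihilator]
          intro z
          obtain ⟨z, rfl⟩ := Submodule.mkQ_surjective _ z
          rw [← _root_.map_smul]
          exact (Submodule.Quotient.mk_eq_zero _).2 ⟨z, rfl⟩
        have hJr : J ≤ (J ⊔ A).radical := le_sup_left.trans Ideal.le_radical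
        refine sup_le (sup_le (le_sup_left.trans hJr) ?_) ?_
        · rw [Ideal.span_le]
          rintro _ ⟨j, rfl⟩
          refine Fin.cases ?_ (fun j => ?_) j
          · have h1 : y ∈ (J ⊔ A).radical := ⟨n, (le_sup_right : A ≤ J ⊔ A) hyA⟩
            have := Ideal.sub_mem _ h1 (hJr hc)
            simpa [hy] using this
          · exact hJr ((le_sup_right : _ ≤ J) (Ideal.subset_span ⟨j, rfl⟩))
        · refine le_trans ?_ (le_sup_right.trans Ideal.le_radical)
          exact LinearMap.annihilator_le_of_surjective q (Submodule.mkQ_surjective _))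
      hK (q m) (by rw [← _root_.map_smul, hm, _root_.map_zero])
    have := tors_kill_of_Kill hK hmem r hr
    rw [← _root_.map_smul] at this
    exact (Submodule.Quotient.mk_eq_zero _).1 this

end LHTheory

namespace LHTheory

section seq
variable {I : Ideal R} {M : Type} [AddCommGroup M] [Module R M] {c : ℕ}

/-- quotient by `x 0` -/
abbrev Qt (M : Type) [AddCommGroup M] [Module R M] (x : R) : Type := M ⧸ LinearMap.range (mu M x)

lemma mem_pSpan_succ (x : Fin (c+1) → R) (i : Fin c) (m : M) :
    m ∈ pSpan M x i.succ ↔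
      (LinearMap.range (mu M (x 0))).mkQ m ∈ pSpan (Qt M (x 0)) (Fin.tail x) i := by
  set q := (LinearMap.range (mu M (x 0))).mkQ with hq
  have hset : x '' {j | j < i.succ} = {x 0} ∪ (Fin.tail x) '' {j | j < i} := by
    ext r
    constructor
    · rintro ⟨j, hj, rfl⟩
      revert hj
      refine Fin.cases (fun _ => Or.inl rfl) (fun j hj => Or.inr ⟨j, ?_, rfl⟩) j
      exact Fin.succ_lt_succ_iff.1 hj
    · rintro (rfl | ⟨j, hj, rfl⟩)
      · exact ⟨0, Fin.succ_pos i, rfl⟩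
      · exact ⟨j.succ, Fin.succ_lt_succ_iff.2 hj, rfl⟩
  have hmap : pSpan (Qt M (x 0)) (Fin.tail x) i = Submodule.map q
      (Ideal.span ((Fin.tail x) '' {j | j < i}) • (⊤ : Submodule R M)) := by
    rw [Submodule.map_smul'', Submodule.map_top, Submodule.range_mkQ]; rfl
  have hx : Ideal.span {x 0} • (⊤ : Submodule R M) = LinearMap.range (mu M (x 0)) := by
    apply le_antisymm
    · rw [Submodule.smul_le]
      intro r hr m _
      obtain ⟨a, rfl⟩ := Ideal.mem_span_singleton'.1 hr
      exact ⟨a • m, by rw [mul_comm, mul_smul]; rfl⟩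
    · rintro _ ⟨m, rfl⟩
      exact Submodule.smul_mem_smul (Ideal.mem_span_singleton_self _) trivial
  rw [hmap, ← Submodule.mem_comap, Submodule.comap_map_eq, hq, Submodule.ker_mkQ, ← hx,
    ← Submodule.sup_smul, pSpan, hset, Ideal.span_union, sup_comm]

lemma pSpan_zero (x : Fin (c+1) → R) : pSpan M x 0 = ⊥ := by
  have : {j : Fin (c+1) | j < 0} = ∅ := by ext j; simp
  rw [pSpan, this]; simp

lemma weak_succ (x : Fin (c+1) → R) :
    IsWeakSeq I M x ↔ (∀ m : M, x 0 • m = 0 → ∀ a ∈ I, a • m = 0) ∧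
      IsWeakSeq I (Qt M (x 0)) (Fin.tail x) := by
  constructor
  · intro h
    refine ⟨fun m hm a ha => ?_, fun i m hm a ha => ?_⟩
    · have := h 0 m (by rw [pSpan_zero]; simpa using hm) a ha
      rw [pSpan_zero] at this; simpa using this
    · obtain ⟨m, rfl⟩ := Submodule.mkQ_surjective _ m
      rw [← _root_.map_smul, ← mem_pSpan_succ] at hm ⊢
      exact h i.succ m hm a ha
  · rintro ⟨h0, h1⟩ i
    refine Fin.cases ?_ (fun i => ?_) i
    · intro m hm a ha
      rw [pSpan_zero] at hm ⊢
      simp only [Submodule.mem_bot] at hm ⊢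
      exact h0 m hm a ha
    · intro m hm a ha
      rw [mem_pSpan_succ, _root_.map_smul] at hm ⊢
      exact h1 i _ hm a ha

variable [IsNoetherianRing R]

lemma weak_to_kill (c : ℕ) : ∀ (M : Type) [AddCommGroup M] [Module R M] (x : Fin c → R),
    (∀ j, x j ∈ I ^ 2) → IsWeakSeq I M x → Kill 1 I M c := by
  induction c with
  | zero => intro M _ _ x _ _ i hi; omega
  | succ c ih =>
    intro M _ _ x hx hw i hi
    simp only [pow_one]
    obtain ⟨h0, h1⟩ := (weak_succ x).1 hw
    have hxI : x 0 ∈ I := Ideal.pow_le_self two_ne_zero (hx 0)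
    have ih' := ih _ (Fin.tail x) (fun j => hx _) h1
    suffices hk : ∀ u : HL I i M, x 0 • u = 0 → ∀ r ∈ I, r • u = 0 by
      intro r hr z
      obtain ⟨t, ht⟩ := torsion z
      exact lemma_C (x 0) (hx 0) hk z t (ht _ (Ideal.pow_mem_pow hxI t)) r hr
    rcases i with _ | i
    · intro u hu r hr
      apply ev0_injective
      rw [_root_.map_smul, _root_.map_zero]
      apply h0 _ _ r hr
      have := congrArg (ev0 I (ModuleCat.of R M)) hu
      rw [_root_.map_smul, _root_.map_zero] at this
      exact this
    · refine ker_mul (x 0) (fun m hm => ⟨1, fun r hr => h0 m hm r (by simpa using hr)⟩)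
        (LinearMap.range (mu M (x 0))).mkQ (Submodule.mkQ_surjective _)
        (Submodule.ker_mkQ _).symm ?_
      intro r hr z
      exact ih' i (by omega) r (by simpa using hr) z

lemma kill_to_weak (hjac : I ≤ (⊥ : Ideal R).jacobson) (c : ℕ) :
    ∀ (M : Type) [AddCommGroup M] [Module R M] [Module.Finite R M] (x : Fin c → R),
    (∀ j, x j ∈ I ^ 2) →
    I ≤ (Ideal.span (Set.range x) ⊔ Module.annihilator R M).radical →
    Kill 1 I M c → IsWeakSeq I M x := by
  induction c with
  | zero => intro M _ _ _ x _ _ _ i; exact i.elim0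
  | succ c ih =>
    intro M _ _ _ x hx hrad hk
    have hxI : ∀ j, x j ∈ I := fun j => Ideal.pow_le_self two_ne_zero (hx j)
    have hrange : Ideal.span (Set.range x) =
        Ideal.span {x 0} ⊔ Ideal.span (Set.range (Fin.tail x)) := by
      rw [← Ideal.span_union]
      congr 1
      ext r
      constructor
      · rintro ⟨j, rfl⟩
        exact Fin.cases (Or.inl rfl) (fun j => Or.inr ⟨j, rfl⟩) j
      · rintro (rfl | ⟨j, rfl⟩)
        · exact ⟨0, rfl⟩
        · exact ⟨j.succ, rfl⟩
    have hB := lemma_B hjac c 1 M (x 0) (Fin.tail x) (hxI 0) (fun j => hxI _)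
      (by rw [← hrange]; exact hrad) hk
    rw [weak_succ]
    refine ⟨fun m hm a ha => tors_kill_of_Kill hk (hB m hm) a (by simpa using ha), ?_⟩
    apply ih _ _ (fun j => hx _)
    · refine hrad.trans (Ideal.radical_mono ?_)
      rw [hrange]
      refine sup_le (sup_le ?_ le_sup_left) ?_
      · refine le_trans ?_ le_sup_right
        rw [Ideal.span_le, Set.singleton_subset_iff, SetLike.mem_coe, Module.mem_annihilator]
        intro z
        obtain ⟨z, rfl⟩ := Submodule.mkQ_surjective _ z
        rw [← _root_.map_smul]
        exact (Submodule.Quotient.mk_eq_zero _).2 ⟨z, rfl⟩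
      · refine le_trans ?_ le_sup_right
        exact LinearMap.annihilator_le_of_surjective (LinearMap.range (mu M (x 0))).mkQ
          (Submodule.mkQ_surjective _)
    · exact lemma_A (x 0) hB (LinearMap.range (mu M (x 0))).mkQ (Submodule.mkQ_surjective _)
        (Submodule.ker_mkQ _).symm (hx 0) hk

lemma exists_rsop (ha : IsAra I M c) : ∃ x : Fin c → R, IsRsop I M x ∧ ∀ j, x j ∈ I ^ 2 := by
  obtain ⟨⟨x, hx⟩, -⟩ := ha
  set A := Module.annihilator R M with hA
  have h1 : ∀ j, ∃ n : ℕ, ∃ a ∈ I, ∃ b ∈ A, a + b = x j ^ n := by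
    intro j
    have : x j ∈ (I + A).radical := by
      rw [← hx]
      exact Ideal.le_radical ((le_sup_left : _ ≤ _ ⊔ A) (Ideal.subset_span ⟨j, rfl⟩))
    obtain ⟨n, hn⟩ := this
    obtain ⟨a, ha, b, hb, h⟩ := Submodule.mem_sup.1 hn
    exact ⟨n, a, ha, b, hb, h⟩
  choose n a ha b hb hab using h1
  refine ⟨fun j => a j ^ 2, ⟨fun j => Ideal.pow_mem_of_mem _ (ha j) 2 two_pos, ?_⟩,
    fun j => Ideal.pow_mem_pow (ha j) 2⟩
  rw [← hA]
  apply le_antisymm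
  · apply Ideal.radical_mono
    refine sup_le ?_ le_sup_right
    rw [Ideal.span_le]
    rintro _ ⟨j, rfl⟩
    exact (le_sup_left : I ≤ I ⊔ A) (Ideal.pow_mem_of_mem _ (ha j) 2 two_pos)
  · rw [← hx, Ideal.radical_le_radical_iff]
    set B := (Ideal.span (Set.range fun j => a j ^ 2) + A) with hB
    have hAB : A ≤ B.radical := le_sup_right.trans Ideal.le_radical
    refine sup_le ?_ hAB
    rw [Ideal.span_le]
    rintro _ ⟨j, rfl⟩
    have h2 : a j ∈ B.radical :=
      ⟨2, (le_sup_left : _ ≤ _ ⊔ A) (Ideal.subset_span ⟨j, rfl⟩)⟩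
    have h3 : x j ^ n j ∈ B.radical := by
      rw [← hab j]; exact Ideal.add_mem _ h2 (hAB (hb j))
    rw [← Ideal.radical_idem]
    exact ⟨n j, h3⟩
end seq

end LHTheory

theorem theorem_4_1 [IsNoetherianRing R] (I : Ideal R)
    (hjac : I ≤ (⊥ : Ideal R).jacobson)
    (M : Type) [AddCommGroup M] [Module R M] [Module.Finite R M]
    (c : ℕ) (hc : IsCd I M c) (ha : IsAra I M c) :
    (IsRelQuasiBuchsbaum I M ↔
      ∃ x : Fin c → R, IsRsop I M x ∧ (∀ j, x j ∈ I ^ 2) ∧ IsWeakSeq I M x) ∧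
    ((∃ x : Fin c → R, IsRsop I M x ∧ (∀ j, x j ∈ I ^ 2) ∧ IsWeakSeq I M x) ↔
      ∀ i : ℕ, i < c → ∀ r ∈ I, ∀ m : locH I i M, r • m = 0) := by
  have hkill : (∀ i : ℕ, i < c → ∀ r ∈ I, ∀ m : locH I i M, r • m = 0) ↔
      LHTheory.Kill 1 I M c := by
    simp only [LHTheory.Kill, pow_one]
    exact forall_congr' fun i => forall_congr' fun _ => forall_congr' fun r => forall_congr' fun _ =>
      LHTheory.bridge I r
  have h23 : (∃ x : Fin c → R, IsRsop I M x ∧ (∀ j, x j ∈ I ^ 2) ∧ IsWeakSeq I M x) →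
      LHTheory.Kill 1 I M c := by
    rintro ⟨x, -, hx, hw⟩
    exact LHTheory.weak_to_kill c M x hx hw
  have h3 : LHTheory.Kill 1 I M c → ∀ x : Fin c → R, IsRsop I M x → (∀ j, x j ∈ I ^ 2) →
      IsWeakSeq I M x := by
    intro hk x hx hx2
    refine LHTheory.kill_to_weak hjac c M x hx2 ?_ hk
    have h1 : I ≤ (I + Module.annihilator R M).radical := le_sup_left.trans Ideal.le_radical
    rw [← hx.2] at h1
    exact h1
  have hex := LHTheory.exists_rsop ha
  refine ⟨⟨?_, ?_⟩, ⟨fun h => hkill.2 (h23 h), fun h => ?_⟩⟩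
  · rintro ⟨c', -, ha', h⟩
    obtain rfl : c' = c := ha'.unique ha
    obtain ⟨x, hx, hx2⟩ := hex
    exact ⟨x, hx, hx2, h x hx hx2⟩
  · intro h
    exact ⟨c, hc, ha, h3 (h23 h)⟩
  · obtain ⟨x, hx, hx2⟩ := hex
    exact ⟨x, hx, hx2, h3 (hkill.1 h) x hx hx2⟩
end
end

section
/- Suppose c := cd(a,M) = ara(a,M) > 0. If M is a-relative Buchsbaum, then every a-relative system of parameters of M is an u.s.d-sequence on M. -/
/-!
Formalization of a statement from "A theory of relative generalized Cohen-Macaulay modules"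
by Divaani-Aazar, Ghanbari Doust, Tousi and Zakeri.

Throughout, `R` is a commutative Noetherian ring and `M` a finitely generated `R`-module.
Conventions used below:
* `locH I i M` is the local cohomology module `H^i_I(M)` (Mathlib's `localCohomology`).
* Conditions `cd(I,M) = c`, `ara(I,M) = n`, `f_I(M) = f`, `grade(I,M) = r` are expressed by
  the predicates `IsCd`, `IsAra`, `IsFinDim`, `IsGrade`.
* Sequences are given as functions `Fin r → R`; `pSpan M x i = ⟨x_0,…,x_{i-1}⟩M`.
* Koszul (co)homology is defined via the explicit (co)chain complex on the `p`-element
  subsets of `{0,…,n-1}`, and the canonical map `λ^i` into local cohomology is the structure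
  map (at exponent 1) into the direct limit of Koszul cohomologies of powers of the sequence,
  which is the realization of `H^i_{⟨x⟩}(M)` used in the paper (2.1(iv)).
-/

open CategoryTheory

noncomputable section

variable {R : Type} [CommRing R]

/-- Permuted positive powers of a relative system of parameters again form one. -/
lemma IsRsop.perm_pow {I : Ideal R} {M : Type} [AddCommGroup M] [Module R M] {c : ℕ}
    {x : Fin c → R} (hx : IsRsop I M x) (σ : Equiv.Perm (Fin c)) (α : Fin c → ℕ)
    (hα : ∀ k, 0 < α k) : IsRsop I M fun k => x (σ k) ^ α k := by
  refine ⟨fun j => Ideal.pow_mem_of_mem I (hx.1 _) _ (hα j), ?_⟩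
  rw [← hx.2]
  apply le_antisymm
  · refine Ideal.radical_mono (sup_le_sup_right ?_ _)
    rw [Ideal.span_le]
    rintro _ ⟨k, rfl⟩
    exact Ideal.pow_mem_of_mem _ (Ideal.subset_span (Set.mem_range_self (σ k))) _ (hα k)
  · rw [Ideal.radical_le_radical_iff]
    refine sup_le ?_ (le_sup_right.trans Ideal.le_radical)
    rw [Ideal.span_le]
    rintro _ ⟨k, rfl⟩
    refine ⟨α (σ.symm k), Ideal.mem_sup_left (Ideal.subset_span ⟨σ.symm k, ?_⟩)⟩
    simp

/-- **Theorem 4.2, (iii) ⟹ (iv).** Suppose `c := cd(I,M) = ara(I,M) > 0`. If `M` is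
`I`-relative Buchsbaum, then every `I`-relative system of parameters of `M` is an
u.s.d-sequence on `M`. -/
theorem theorem_4_2_iii_iv [IsNoetherianRing R] (I : Ideal R)
    (M : Type) [AddCommGroup M] [Module R M] [Module.Finite R M]
    (c : ℕ) (hc : IsCd I M c) (ha : IsAra I M c) (hpos : 0 < c)
    (hb : IsRelBuchsbaum I M) :
    ∀ x : Fin c → R, IsRsop I M x → IsUSDSeq M x := by
  intro x hx σ α hα i j hij m
  obtain ⟨c', _, ha', hw⟩ := hb
  obtain rfl : c' = c := ha'.unique ha
  have hy := hx.perm_pow σ α hα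
  generalize (fun k => x (σ k) ^ α k) = y at hy ⊢
  constructor
  · intro h
    rw [mul_smul] at h
    have h2 := hw y hy i _ h (y j) (hy.1 j)
    have hz := hw _ (hy.perm_pow (Equiv.swap i j) (fun k => if k = i then 2 else 1)
      (fun k => by split_ifs <;> norm_num)) i m
    have hs : pSpan M (fun k => y (Equiv.swap i j k) ^ (if k = i then 2 else 1)) i
        = pSpan M y i := by
      unfold pSpan
      congr 2
      refine Set.image_congr fun k hk => ?_
      have hk' : k < i := hk
      rw [Equiv.swap_apply_of_ne_of_ne hk'.ne (hk'.trans_le hij).ne, if_neg hk'.ne, pow_one]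
    rw [hs] at hz
    refine hz ?_ (y j) (hy.1 j)
    simpa [pow_two, mul_smul] using h2
  · intro h
    rw [mul_smul]
    exact Submodule.smul_mem _ _ h
end
end
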